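/- Let p be a prime and G a non-abelian p-group of order p^n such that G/G' is elementary abelian, |G'| = p, Z(G) has order at least p^3 and exponent exactly p^2, and |M(G)| = p^{(n-1)(n-2)/2 - 1}. Then G ≅ E(2) × Z, where E(2) is a central product of an extraspecial p-group with a cyclic group of order p^2 amalgamating centers and Z is an elementary abelian p-group. -/

import Mathlib

/-- The kernel of the canonical free presentation `FreeGroup G → G`. -/
def presentationKernel (G : Type u) [Group G] : Subgroup (FreeGroup G) :=
  (FreeGroup.lift (id : G → G)).ker

/-- The Schur multiplier `M(G) = H₂(G, ℤ)` (second integral group homology) of a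
group `G`, realised via Hopf's integral formula `H₂(G, ℤ) ≅ (R ⊓ [F, F]) / [F, R]`,
where `F = FreeGroup G` is the canonical free group surjecting onto `G` with
kernel `R`. -/
def SchurMultiplier (G : Type u) [Group G] : Type u :=
  ↥(presentationKernel G ⊓ commutator (FreeGroup G)) ⧸
    (⁅(⊤ : Subgroup (FreeGroup G)), presentationKernel G⁆.subgroupOf
      (presentationKernel G ⊓ commutator (FreeGroup G)))

/-- A finite `p`-group `H` is extraspecial if its center, derived subgroup and
Frattini subgroup coincide and have order `p`. -/
def IsExtraspecial (p : ℕ) (H : Type*) [Group H] : Prop :=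
  Subgroup.center H = commutator H ∧ Subgroup.center H = frattini H ∧
    Nat.card (Subgroup.center H) = p

/-- `E` is a group of type `E(2)` (with parameter `m`): a central product of an
extraspecial `p`-group `H` of order `p^(2m+1)` with a cyclic group `K` of order
`p^2`, amalgamated over the center of `H`: `H` and `K` commute elementwise,
`E = HK` and `H ⊓ K = Z(H)`. -/
def IsTypeE2 (p m : ℕ) (E : Type*) [Group E] : Prop :=
  ∃ H K : Subgroup E,
    IsExtraspecial p H ∧ Nat.card H = p ^ (2 * m + 1) ∧
    IsCyclic K ∧ Nat.card K = p ^ 2 ∧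
    (∀ h ∈ H, ∀ k ∈ K, h * k = k * h) ∧
    H ⊔ K = ⊤ ∧ (H ⊓ K).subgroupOf H = Subgroup.center H

/-!
Since `G/G'` is elementary abelian, every subgroup of `G` has a complement modulo any subgroup
`N ≥ G'`. The center contains `z` of order `p ^ 2`, so `G' = ⟨z ^ p⟩`, and every `p`-th power in
`Z(G)` is the `p`-th power of an element of `⟨z⟩`; hence `Z(G) = ⟨z⟩ × Z` with `Z` elementary
abelian. A complement `E` of `Z` modulo `⟨z⟩` then gives `G = E × Z` with `Z(E) = ⟨z⟩`, and a
complement `H` of `Z(E)` in `E` modulo `G'` is extraspecial with `E = H ⟨z⟩`. The order of `H` is an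
odd power of `p` because the commutator form splits off hyperbolic planes.
-/

open Subgroup
open scoped commutatorElement

section Complements

theorem complementedLattice_subgroup_of_pow_eq_one {A : Type*} [CommGroup A] {p : ℕ}
    (hp : p.Prime) (hA : ∀ a : A, a ^ p = 1) : ComplementedLattice (Subgroup A) := by
  have := Fact.mk hp
  let : Module (ZMod p) (Additive A) := AddCommGroup.zmodModule (n := p) fun a => hA a.toMul
  let e : Subgroup A ≃o Submodule (ZMod p) (Additive A) :=
    toAddSubgroup.trans (AddSubgroup.toZModSubmodule p)
  exact e.complementedLattice_iff.2 inferInstance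

open scoped IsMulCommutative in
theorem exists_le_sup_eq_top_inf_le {G : Type*} [Group G] {p : ℕ} (hp : p.Prime)
    {N : Subgroup G} (hcomm : commutator G ≤ N) (hpow : ∀ g : G, g ^ p ∈ N) (S : Subgroup G) :
    ∃ T : Subgroup G, N ≤ T ∧ S ⊔ T = ⊤ ∧ S ⊓ T ≤ N := by
  have : N.Normal := Normal.of_commutator_le G hcomm
  have : IsMulCommutative (G ⧸ N) := Normal.quotient_commutative_iff_commutator_le.2 hcomm
  have : ComplementedLattice (Subgroup (G ⧸ N)) :=
    complementedLattice_subgroup_of_pow_eq_one hp <| QuotientGroup.mk_surjective.forall.2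
      fun g => (QuotientGroup.eq_one_iff _).2 (hpow g)
  let π := QuotientGroup.mk' N
  obtain ⟨T, hT⟩ := exists_isCompl (S.map π)
  have hker : π.ker = N := QuotientGroup.ker_mk' N
  have hN : N ≤ T.comap π := hker.symm.trans_le (ker_le_comap π T)
  refine ⟨T.comap π, hN, ?_, fun g hg => ?_⟩
  · calc S ⊔ T.comap π = (S ⊔ π.ker) ⊔ T.comap π := by
          rw [sup_assoc, hker, sup_eq_right.2 hN]
      _ = (S.map π ⊔ T).comap π := by
          rw [← comap_map_eq, comap_sup_eq _ _ _ (QuotientGroup.mk'_surjective N)]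
      _ = ⊤ := by rw [hT.sup_eq_top, comap_top]
  · rw [← hker]
    exact disjoint_def.1 hT.disjoint (mem_map_of_mem π hg.1) hg.2

theorem exists_isCompl_of_forall_exists_pow_eq {A : Type*} [CommGroup A] {p : ℕ} (hp : p.Prime)
    {S : Subgroup A} (hS : ∀ a : A, ∃ s ∈ S, s ^ p = a ^ p) :
    ∃ T : Subgroup A, IsCompl S T ∧ ∀ t ∈ T, t ^ p = 1 := by
  let Ω : Subgroup A := (powMonoidHom p).ker
  have : ComplementedLattice (Subgroup Ω) :=
    complementedLattice_subgroup_of_pow_eq_one hp fun a => Subtype.ext a.2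
  obtain ⟨T, hT⟩ := exists_isCompl (S.subgroupOf Ω)
  have hTΩ : T.map Ω.subtype ≤ Ω := map_subtype_le T
  have hΩ : Ω ≤ S ⊔ T.map Ω.subtype := by
    have h := congrArg (Subgroup.map Ω.subtype) hT.sup_eq_top
    rw [Subgroup.map_sup, subgroupOf_map_subtype, ← MonoidHom.range_eq_map, range_subtype] at h
    exact h.ge.trans (sup_le_sup_right inf_le_left _)
  refine ⟨T.map Ω.subtype, ⟨?_, ?_⟩, fun t ht => hTΩ ht⟩
  · rw [disjoint_def]
    rintro _ hs ⟨t, ht, rfl⟩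
    rw [disjoint_def.1 hT.disjoint (mem_subgroupOf.2 hs) ht, map_one]
  · rw [codisjoint_iff, eq_top_iff]
    intro a _
    obtain ⟨s, hs, hsa⟩ := hS a
    have ha : s⁻¹ * a ∈ Ω := by simp [Ω, hsa, mul_pow]
    simpa using mul_mem (mem_sup_left hs) (hΩ ha)

end Complements

section CentralFactors

variable {G : Type*} [Group G]

theorem sup_inf_assoc_of_le_of_normal {A C : Subgroup G} (B : Subgroup G) [B.Normal] (h : A ≤ C) :
    (A ⊔ B) ⊓ C = A ⊔ B ⊓ C := by
  refine le_antisymm ?_ (sup_le (le_inf le_sup_left h) (inf_le_inf_right C le_sup_right))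
  rintro _ ⟨hab, hC⟩
  obtain ⟨a, ha, b, hb, rfl⟩ := mem_sup_of_normal_right.1 hab
  exact mul_mem_sup ha ⟨hb, (mul_mem_cancel_left (h ha)).1 hC⟩

theorem center_eq_subgroupOf_of_sup_eq_top {H L : Subgroup G} (hL : L ≤ centralizer H)
    (h : H ⊔ L = ⊤) : center H = (center G).subgroupOf H := by
  ext x
  refine ⟨fun hx => ?_, fun hx => mem_center_iff.2 fun y => Subtype.ext (mem_center_iff.1 hx y)⟩
  have hH : H ≤ centralizer {(x : G)} := fun y hy =>
    mem_centralizer_singleton_iff.2 (congrArg Subtype.val (mem_center_iff.1 hx ⟨y, hy⟩))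
  have hL' : L ≤ centralizer {(x : G)} :=
    hL.trans (centralizer_le (Set.singleton_subset_iff.2 x.2))
  have htop : centralizer {(x : G)} = ⊤ := top_le_iff.1 (h ▸ sup_le hH hL')
  exact centralizer_eq_top_iff_subset.1 htop rfl

theorem commutatorElement_mul_mul_of_mem_center {a b y z : G} (hy : y ∈ center G)
    (hz : z ∈ center G) : ⁅a * y, b * z⁆ = ⁅a, b⁆ := by
  have hyc (g : G) : ⁅y, g⁆ = 1 :=
    commutatorElement_eq_one_iff_mul_comm.2 (mem_center_iff.1 hy g).symm
  have hzc (g : G) : ⁅g, z⁆ = 1 :=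
    commutatorElement_eq_one_iff_mul_comm.2 (mem_center_iff.1 hz g)
  rw [commutatorElement_mul_left_eq_conj_mul, commutatorElement_mul_right_eq_mul_conj a, hyc, hzc]
  simp

theorem commutator_self_eq_of_sup_center_eq_top {H : Subgroup G} (h : H ⊔ center G = ⊤) :
    ⁅H, H⁆ = commutator G := by
  refine (commutator_mono le_top le_top).antisymm (commutator_le.2 ?_)
  intro a _ b _
  obtain ⟨a, ha, y, hy, rfl⟩ := mem_sup_of_normal_right.1 (h ▸ mem_top a)
  obtain ⟨b, hb, z, hz, rfl⟩ := mem_sup_of_normal_right.1 (h ▸ mem_top b)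
  rw [commutatorElement_mul_mul_of_mem_center hy hz]
  exact commutator_mem_commutator ha hb

theorem commutator_inf_center_le_frattini : commutator G ⊓ center G ≤ frattini G := by
  refine le_iInf₂ fun M hM => ?_
  by_cases hZ : center G ≤ M
  · exact inf_le_right.trans hZ
  · have hsup : M ⊔ center G = ⊤ := hM.2 _ (left_lt_sup.2 hZ)
    rw [← commutator_self_eq_of_sup_center_eq_top hsup]
    exact inf_le_left.trans M.commutator_le_self

theorem frattini_le_of_pow_mem [IsCoatomic (Subgroup G)] {p : ℕ} (hp : p.Prime) {N : Subgroup G}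
    (hcomm : commutator G ≤ N) (hpow : ∀ g : G, g ^ p ∈ N) : frattini G ≤ N := by
  obtain ⟨T, -, hsup, hinf⟩ := exists_le_sup_eq_top_inf_le hp hcomm hpow (frattini G)
  have hT : T = ⊤ := frattini_nongenerating (by rwa [sup_comm])
  rwa [hT, inf_top_eq] at hinf

theorem nonempty_mulEquiv_prod_of_isCompl {H L : Subgroup G} (hL : L ≤ centralizer H)
    (h : IsCompl H L) : Nonempty (G ≃* H × L) := by
  let f : H × L →* G := H.subtype.noncommCoprod L.subtype fun x y => hL y.2 x x.2
  have hinj : Function.Injective f := (MonoidHom.noncommCoprod_injective ..).2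
    ⟨H.subtype_injective, L.subtype_injective, by simpa using h.disjoint⟩
  have hsurj : Function.Surjective f := MonoidHom.range_eq_top.1 <|
    (MonoidHom.noncommCoprod_range ..).trans <| by
    rw [range_subtype, range_subtype, h.sup_eq_top]
  exact ⟨(MulEquiv.ofBijective f ⟨hinj, hsurj⟩).symm⟩

end CentralFactors

theorem zpowers_eq_of_prime_card {G : Type*} [Group G] {p : ℕ} (hp : p.Prime) {H : Subgroup G}
    (hH : Nat.card H = p) {g : G} (hg : g ∈ H) (hg1 : g ≠ 1) : zpowers g = H := by
  have := Fact.mk hp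
  have htop := zpowers_eq_top_of_prime_card hH (g := ⟨g, hg⟩) (by simpa using hg1)
  simpa [← MonoidHom.range_eq_map] using congrArg (Subgroup.map H.subtype) htop

section ClassTwo

variable {G : Type*} [Group G]

/-- In a group whose commutators are central, `g ↦ ⁅g, x⁆` is a homomorphism to the center. -/
def commutatorHom (hc : commutator G ≤ center G) (x : G) : G →* center G where
  toFun g := ⟨⁅g, x⁆, hc (commutator_mem_commutator (mem_top g) (mem_top x))⟩
  map_one' := by simp
  map_mul' a b := Subtype.ext <| by
    have hb : ⁅b, x⁆ ∈ center G := hc (commutator_mem_commutator (mem_top b) (mem_top x))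
    change ⁅a * b, x⁆ = ⁅a, x⁆ * ⁅b, x⁆
    rw [commutatorElement_mul_left_eq_conj_mul, mem_center_iff.1 hb a, mul_inv_cancel_right,
      mem_center_iff.1 hb]

theorem coe_commutatorHom (hc : commutator G ≤ center G) (x g : G) :
    (commutatorHom hc x g : G) = ⁅g, x⁆ :=
  rfl

theorem ker_prod_commutatorHom (hc : commutator G ≤ center G) (x y : G) :
    ((commutatorHom hc x).prod (commutatorHom hc y)).ker = centralizer {x, y} := by
  ext g
  simp [MonoidHom.mem_ker, Prod.ext_iff, Subtype.ext_iff, coe_commutatorHom, mem_centralizer_iff,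
    commutatorElement_eq_one_iff_mul_comm, eq_comm (a := g * _)]

theorem map_closure_pair_prod_commutatorHom (hc : commutator G ≤ center G) {x y : G}
    (hxy : zpowers ⁅x, y⁆ = center G) :
    (closure {x, y}).map ((commutatorHom hc x).prod (commutatorHom hc y)) = ⊤ := by
  rw [eq_top_iff]
  rintro ⟨⟨u, hu⟩, ⟨v, hv⟩⟩ -
  obtain ⟨i, rfl⟩ : u ∈ zpowers ⁅y, x⁆ := by
    rwa [← zpowers_inv, commutatorElement_inv, hxy]
  obtain ⟨j, rfl⟩ : v ∈ zpowers ⁅x, y⁆ := hxy ▸ hv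
  have hx : x ∈ closure {x, y} := subset_closure (Set.mem_insert x _)
  have hy : y ∈ closure {x, y} := subset_closure (Set.mem_insert_of_mem x rfl)
  refine ⟨y ^ i * x ^ j, mul_mem (zpow_mem hy i) (zpow_mem hx j), ?_⟩
  ext <;> simp [coe_commutatorHom]

theorem closure_pair_sup_centralizer_eq_top (hc : commutator G ≤ center G) {x y : G}
    (hxy : zpowers ⁅x, y⁆ = center G) : closure {x, y} ⊔ centralizer {x, y} = ⊤ := by
  rw [← ker_prod_commutatorHom hc, ← comap_map_eq, map_closure_pair_prod_commutatorHom hc hxy,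
    comap_top]

theorem index_centralizer_pair (hc : commutator G ≤ center G) {x y : G}
    (hxy : zpowers ⁅x, y⁆ = center G) :
    (centralizer {x, y}).index = Nat.card (center G) ^ 2 := by
  have hrange : ((commutatorHom hc x).prod (commutatorHom hc y)).range = ⊤ :=
    top_le_iff.1 <| map_closure_pair_prod_commutatorHom hc hxy ▸ map_le_range _ _
  rw [← ker_prod_commutatorHom hc, index_ker, hrange, card_top, Nat.card_prod, sq]

theorem center_centralizer_pair (hc : commutator G ≤ center G) {x y : G}
    (hxy : zpowers ⁅x, y⁆ = center G) :
    center (centralizer {x, y}) = (center G).subgroupOf (centralizer {x, y}) :=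
  center_eq_subgroupOf_of_sup_eq_top (closure_le_centralizer_centralizer _)
    (sup_comm _ (centralizer {x, y}) ▸ closure_pair_sup_centralizer_eq_top hc hxy)

theorem exists_zpowers_commutatorElement_eq_center {p : ℕ} (hp : p.Prime)
    (hc : commutator G ≤ center G) (hZ : Nat.card (center G) = p) (hG : center G ≠ ⊤) :
    ∃ x y : G, zpowers ⁅x, y⁆ = center G := by
  rw [Ne, ← commutator_eq_bot_iff_center_eq_top, _root_.commutator_def, ← le_bot_iff,
    commutator_le] at hG
  push Not at hG
  obtain ⟨x, hx, y, hy, hxy⟩ := hG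
  exact ⟨x, y, zpowers_eq_of_prime_card hp hZ (hc (commutator_mem_commutator hx hy)) hxy⟩

end ClassTwo

theorem commutator_subgroup_le_subgroupOf {G : Type*} [Group G] (H : Subgroup G) :
    commutator H ≤ (commutator G).subgroupOf H := by
  rw [← map_subtype_le_map_subtype, map_subtype_commutator, subgroupOf_map_subtype]
  exact le_inf (commutator_mono le_top le_top) H.commutator_le_self

theorem exists_card_eq_pow_of_card_center_eq {G : Type*} [Group G] [Finite G] {p : ℕ}
    (hp : p.Prime) (hc : commutator G ≤ center G) (hZ : Nat.card (center G) = p) :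
    ∃ m, Nat.card G = p ^ (2 * m + 1) := by
  induction hn : Nat.card G using Nat.strong_induction_on generalizing G with | _ n ih
  by_cases hG : center G = ⊤
  · exact ⟨0, by simpa [hG, hn] using hZ⟩
  obtain ⟨x, y, hxy⟩ := exists_zpowers_commutatorElement_eq_center hp hc hZ hG
  let K := centralizer {x, y}
  have hKZ : center K = (center G).subgroupOf K := center_centralizer_pair hc hxy
  have hKc : commutator K ≤ center K :=
    (commutator_subgroup_le_subgroupOf K).trans (hKZ ▸ comap_mono hc)
  have hKcard : Nat.card (center K) = p := by
    rw [hKZ, Nat.card_congr (subgroupOfEquivOfLe (center_le_centralizer _)).toEquiv, hZ]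
  have hmul : Nat.card K * p ^ 2 = n := by
    rw [← hn, ← K.card_mul_index, index_centralizer_pair hc hxy, hZ]
  have hlt : Nat.card K < n := by
    rw [← hmul]
    exact lt_mul_of_one_lt_right Nat.card_pos (Nat.one_lt_pow two_ne_zero hp.one_lt)
  obtain ⟨m, hm⟩ := ih _ hlt hKc hKcard rfl
  exact ⟨m + 1, by rw [← hmul, hm]; ring⟩

/-- A group whose derived subgroup has prime order `p` and whose abelianization has exponent
dividing `p`. For finite `p`-groups this is the usual condition that `G' = Φ(G)` has order `p`. -/
structure IsGeneralizedExtraspecial (p : ℕ) (G : Type*) [Group G] : Prop where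
  card_commutator : Nat.card (commutator G) = p
  pow_mem_commutator (g : G) : g ^ p ∈ commutator G

namespace IsGeneralizedExtraspecial

variable {p : ℕ} {G : Type*} [Group G]

theorem of_injective {H : Type*} [Group H] (h : IsGeneralizedExtraspecial p H) {f : G →* H}
    (hf : Function.Injective f) (hsup : f.range ⊔ center H = ⊤) :
    IsGeneralizedExtraspecial p G := by
  have hmap : (commutator G).map f = commutator H := by
    rw [map_commutator_eq, commutator_self_eq_of_sup_center_eq_top hsup]
  refine ⟨?_, fun g => ?_⟩
  · rw [← card_map_of_injective hf, hmap, h.card_commutator]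
  · rw [← mem_map_iff_mem hf, hmap, map_pow]
    exact h.pow_mem_commutator (f g)

theorem of_sup_center_eq_top (h : IsGeneralizedExtraspecial p G) {H : Subgroup G}
    (hsup : H ⊔ center G = ⊤) : IsGeneralizedExtraspecial p H :=
  h.of_injective H.subtype_injective (by rwa [range_subtype])

theorem isExtraspecial [IsCoatomic (Subgroup G)] (h : IsGeneralizedExtraspecial p G)
    (hp : p.Prime) (hZ : center G = commutator G) : IsExtraspecial p G := by
  refine ⟨hZ, le_antisymm ?_ ?_, hZ ▸ h.card_commutator⟩
  · simpa [hZ] using commutator_inf_center_le_frattini (G := G)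
  · exact hZ ▸ frattini_le_of_pow_mem hp le_rfl h.pow_mem_commutator

open scoped IsMulCommutative in
theorem exists_commutator_eq_zpowers_pow (h : IsGeneralizedExtraspecial p G) (hp : p.Prime)
    (hexp : Monoid.exponent (center G) = p ^ 2) :
    ∃ z ∈ center G, orderOf z = p ^ 2 ∧ commutator G = zpowers (z ^ p) := by
  have hexists : Monoid.ExponentExists (center G) :=
    Monoid.exponent_ne_zero.1 (hexp ▸ pow_ne_zero 2 hp.ne_zero)
  obtain ⟨z, hz⟩ := Monoid.exists_orderOf_eq_exponent (G := center G) hexists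
  have hord : orderOf (z : G) = p ^ 2 := by rw [orderOf_coe, hz, hexp]
  have hne : (z : G) ^ p ≠ 1 := fun h1 => by
    have hdvd : p ^ 2 ∣ p ^ 1 := by simpa [hord] using orderOf_dvd_of_pow_eq_one h1
    exact absurd ((Nat.pow_dvd_pow_iff_le_right hp.one_lt).1 hdvd) (by norm_num)
  exact ⟨z, z.2, hord,
    (zpowers_eq_of_prime_card hp h.card_commutator (h.pow_mem_commutator z) hne).symm⟩

theorem commutator_le_center (h : IsGeneralizedExtraspecial p G) (hp : p.Prime)
    (hexp : Monoid.exponent (center G) = p ^ 2) : commutator G ≤ center G := by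
  obtain ⟨z, hz, -, hcomm⟩ := h.exists_commutator_eq_zpowers_pow hp hexp
  rw [hcomm, zpowers_le]
  exact pow_mem hz p

theorem exists_isTypeE2 [Finite G] (h : IsGeneralizedExtraspecial p G) (hp : p.Prime)
    [IsCyclic (center G)] (hZ : Nat.card (center G) = p ^ 2) : ∃ m, IsTypeE2 p m G := by
  have hc : commutator G ≤ center G :=
    h.commutator_le_center hp (IsCyclic.exponent_eq_card.trans hZ)
  obtain ⟨H, hH, hsup, hinf⟩ :=
    exists_le_sup_eq_top_inf_le hp le_rfl h.pow_mem_commutator (center G)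
  rw [sup_comm] at hsup
  have hHZ : center H = (center G).subgroupOf H :=
    center_eq_subgroupOf_of_sup_eq_top (center_le_centralizer _) hsup
  have hH' : center H = commutator H := by
    apply map_injective H.subtype_injective
    rw [map_subtype_commutator, commutator_self_eq_of_sup_center_eq_top hsup, hHZ,
      subgroupOf_map_subtype]
    exact le_antisymm hinf (le_inf hc hH)
  have hext : IsExtraspecial p H := (h.of_sup_center_eq_top hsup).isExtraspecial hp hH'
  obtain ⟨m, hm⟩ := exists_card_eq_pow_of_card_center_eq hp hH'.ge hext.2.2
  refine ⟨m, H, center G, hext, hm, inferInstance, hZ, fun g _ z hz => mem_center_iff.1 hz g, hsup,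
    ?_⟩
  rw [inf_subgroupOf_left, hHZ]

open scoped IsMulCommutative in
theorem exists_disjoint_zpowers_sup_eq_center (h : IsGeneralizedExtraspecial p G) (hp : p.Prime)
    {z : G} (hz : z ∈ center G) (hcomm : commutator G = zpowers (z ^ p)) :
    ∃ Z : Subgroup G, Disjoint (zpowers z) Z ∧ zpowers z ⊔ Z = center G ∧ ∀ x ∈ Z, x ^ p = 1 := by
  have hpow (a : center G) : ∃ s ∈ zpowers (⟨z, hz⟩ : center G), s ^ p = a ^ p := by
    obtain ⟨i, hi : (z ^ p) ^ i = (a : G) ^ p⟩ := hcomm ▸ h.pow_mem_commutator (a : G)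
    refine ⟨_, zpow_mem (mem_zpowers _) i, Subtype.ext ?_⟩
    rw [coe_pow, coe_zpow, coe_pow, ← hi, ← zpow_natCast, ← zpow_natCast, zpow_comm]
  obtain ⟨Z, hZ, hZp⟩ := exists_isCompl_of_forall_exists_pow_eq hp hpow
  have hmap : (zpowers (⟨z, hz⟩ : center G)).map (center G).subtype = zpowers z :=
    MonoidHom.map_zpowers _ _
  refine ⟨Z.map (center G).subtype, ?_, ?_, ?_⟩
  · rw [← hmap]
    exact disjoint_map (center G).subtype_injective hZ.disjoint
  · rw [← hmap, ← Subgroup.map_sup, hZ.sup_eq_top, ← MonoidHom.range_eq_map, range_subtype]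
  · rintro _ ⟨x, hx, rfl⟩
    exact congrArg Subtype.val (hZp x hx)

theorem exists_isCompl_isTypeE2 [Finite G] (h : IsGeneralizedExtraspecial p G) (hp : p.Prime)
    (hexp : Monoid.exponent (center G) = p ^ 2) :
    ∃ E Z : Subgroup G, (∃ m, IsTypeE2 p m E) ∧ Z ≤ center G ∧ (∀ z ∈ Z, z ^ p = 1) ∧
      IsCompl E Z := by
  obtain ⟨z, hz, hord, hcomm⟩ := h.exists_commutator_eq_zpowers_pow hp hexp
  obtain ⟨Z, hzZ, hsplit, hZp⟩ := h.exists_disjoint_zpowers_sup_eq_center hp hz hcomm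
  have hZ : Z ≤ center G := hsplit ▸ le_sup_right
  have hle : commutator G ≤ zpowers z := hcomm ▸ zpowers_le.2 (pow_mem (mem_zpowers z) p)
  obtain ⟨E, hzE, hsup, hinf⟩ := exists_le_sup_eq_top_inf_le hp hle
    (fun g => hle (h.pow_mem_commutator g)) Z
  rw [sup_comm] at hsup
  have hdisj : E ⊓ Z = ⊥ := by
    rw [inf_comm]
    exact le_bot_iff.1 <| hzZ.le_bot.trans' (le_inf hinf inf_le_left)
  have hnormal : Z.Normal :=
    ⟨fun a ha g => by rwa [mem_center_iff.1 (hZ ha) g, mul_inv_cancel_right]⟩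
  have hEZ : center E = (zpowers z).subgroupOf E := by
    rw [center_eq_subgroupOf_of_sup_eq_top (hZ.trans (center_le_centralizer _)) hsup, ← hsplit,
      ← inf_subgroupOf_right, sup_inf_assoc_of_le_of_normal Z hzE, inf_comm, hdisj, sup_bot_eq]
  have hE : IsGeneralizedExtraspecial p E :=
    h.of_sup_center_eq_top (top_le_iff.1 (hsup ▸ sup_le_sup_left hZ E))
  let e : center E ≃* zpowers z := (MulEquiv.subgroupCongr hEZ).trans (subgroupOfEquivOfLe hzE)
  have : IsCyclic (center E) := isCyclic_of_surjective e.symm e.symm.surjective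
  have hcard : Nat.card (center E) = p ^ 2 := by
    rw [Nat.card_congr e.toEquiv, Nat.card_zpowers, hord]
  exact ⟨E, Z, hE.exists_isTypeE2 hp hcard, hZ, hZp, IsCompl.of_eq hdisj hsup⟩

end IsGeneralizedExtraspecial

open scoped IsMulCommutative in
theorem classification_big_center_exponent_p_sq_general {p : ℕ} (hp : p.Prime)
    {G : Type*} [Group G] [Finite G] (habElem : ∀ x : Abelianization G, x ^ p = 1)
    (hG' : Nat.card (commutator G) = p)
    (hZexp : Monoid.exponent (center G) = p ^ 2) :
    ∃ (E Z : Type) (_ : Group E) (_ : CommGroup Z) (m : ℕ),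
      IsTypeE2 p m E ∧ Finite Z ∧ (∀ z : Z, z ^ p = 1) ∧
      Nonempty (G ≃* E × Z) := by
  have hG : IsGeneralizedExtraspecial p G :=
    ⟨hG', fun g => (QuotientGroup.eq_one_iff _).1 (habElem (Abelianization.of g))⟩
  let e : Shrink.{0} G ≃* G := Shrink.mulEquiv
  have hS : IsGeneralizedExtraspecial p (Shrink.{0} G) :=
    hG.of_injective (f := e.toMonoidHom) e.injective (by
      rw [MonoidHom.range_eq_top.2 e.surjective, top_sup_eq])
  have hSexp : Monoid.exponent (center (Shrink.{0} G)) = p ^ 2 := by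
    rw [Monoid.exponent_eq_of_mulEquiv (centerCongr e), hZexp]
  obtain ⟨E, Z, ⟨m, hE⟩, hZ, hZp, hEZ⟩ := hS.exists_isCompl_isTypeE2 hp hSexp
  obtain ⟨f⟩ := nonempty_mulEquiv_prod_of_isCompl (hZ.trans (center_le_centralizer _)) hEZ
  have : IsMulCommutative Z :=
    le_centralizer_iff_isMulCommutative.1 (hZ.trans (center_le_centralizer _))
  exact ⟨E, Z, inferInstance, inferInstance, m, hE, inferInstance, fun z => Subtype.ext (hZp z z.2),
    ⟨e.symm.trans f⟩⟩

/-- **Theorem 5.** Let `G` be a non-abelian `p`-group of order `p^n` with elementary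
abelian abelianization, `|G'| = p`, a center of order at least `p^3` and exponent
exactly `p^2`, and `s(G) = 2`. Then `G ≅ E(2) × Z` with `Z` elementary abelian. -/
theorem classification_big_center_exponent_p_sq {p n : ℕ} (hp : p.Prime)
    {G : Type*} [Group G] (hG : Nat.card G = p ^ n)
    (hnab : ∃ a b : G, a * b ≠ b * a)
    (habElem : ∀ x : Abelianization G, x ^ p = 1)
    (hG' : Nat.card (commutator G) = p)
    (hZcard : p ^ 3 ≤ Nat.card (Subgroup.center G))
    (hZexp : Monoid.exponent (Subgroup.center G) = p ^ 2)
    (hM : Nat.card (SchurMultiplier G) = p ^ ((n - 1) * (n - 2) / 2 - 1)) :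
    ∃ (E Z : Type) (_ : Group E) (_ : CommGroup Z) (m : ℕ),
      IsTypeE2 p m E ∧ Finite Z ∧ (∀ z : Z, z ^ p = 1) ∧
      Nonempty (G ≃* E × Z) := by
  have : Finite G := Nat.finite_of_card_ne_zero (hG ▸ pow_ne_zero n hp.ne_zero)
  exact classification_big_center_exponent_p_sq_general hp habElem hG' hZexp
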